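/- arXiv:1903.09869 — 2 statements merged into one kernel-verified Lean document; each statement's English description precedes it below -/
import Mathlib

section
/- Let (X, ‖·‖) be a normed vector space and φ : X → X a contraction with fixed point x* ∈ X and Lipschitz constant λ < 1. Let (y_t)_{t∈ℕ}, (d_t)_{t∈ℕ} be sequences in X satisfying y_{t+1} = φ(y_t) + d_t for all t, with bounded disturbances. If ‖d_t‖ converges to 0 with increasing permanence, then y_t converges to x* with increasing permanence (i.e. ‖y_t − x*‖ ⇝ 0). -/
/-- Convergence with increasing permanence (i.p.) in a (pseudo)metric space. -/
def ConvIP {S : Type*} [PseudoMetricSpace S] (s : ℕ → S) (s' : S) : Prop :=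
  ∀ ε > 0, ∀ D N : ℕ, ∃ n, N ≤ n ∧ ∀ i, 1 ≤ i → i ≤ D → dist s' (s (n + i)) ≤ ε

/-- Disturbed contraction dynamics with vanishing (i.p.) disturbances: the iterates
converge to the fixed point with increasing permanence. -/
theorem contraction_vanishing_disturbance_convIP {X : Type*} [NormedAddCommGroup X]
    [NormedSpace ℝ X]
    (φ : X → X) (lam : ℝ) (hlam0 : 0 ≤ lam) (hlam1 : lam < 1)
    (hlip : ∀ a b : X, ‖φ a - φ b‖ ≤ lam * ‖a - b‖)
    (xstar : X) (hfix : φ xstar = xstar)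
    (y d : ℕ → X) (hrec : ∀ t : ℕ, y (t + 1) = φ (y t) + d t)
    (b : ℝ) (hb : ∀ t, ‖d t‖ ≤ b)
    (hd : ConvIP (fun t => ‖d t‖) 0) :
    ConvIP y xstar := by
  have hstep : ∀ t, ‖y (t + 1) - xstar‖ ≤ lam * ‖y t - xstar‖ + ‖d t‖ := by
    intro t
    have h1 : y (t + 1) - xstar = (φ (y t) - φ xstar) + d t := by
      rw [hrec, hfix]; abel
    rw [h1]
    exact (norm_add_le _ _).trans (add_le_add (hlip _ _) le_rfl)
  have hpos : 0 < 1 - lam := by linarith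
  have hb0 : 0 ≤ b := (norm_nonneg _).trans (hb 0)
  obtain ⟨c, hc⟩ : ∃ c, c = b / (1 - lam) := ⟨_, rfl⟩
  have hc0 : 0 ≤ c := by rw [hc]; positivity
  have hcb : c * (1 - lam) = b := by rw [hc]; field_simp
  obtain ⟨M, hM⟩ : ∃ M, M = ‖y 0 - xstar‖ + c := ⟨_, rfl⟩
  have hy0 := norm_nonneg (y 0 - xstar)
  have hM0 : 0 ≤ M := by linarith
  have hbd : ∀ t, ‖y t - xstar‖ ≤ M := by
    intro t
    induction t with
    | zero => linarith
    | succ t ih =>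
      have h1 := hstep t
      have h2 := hb t
      have h3 := mul_le_mul_of_nonneg_left ih hlam0
      nlinarith [mul_nonneg hpos.le hy0]
  intro ε hε D N
  obtain ⟨K, hK⟩ : ∃ K : ℕ, lam ^ K * M ≤ ε / 2 := by
    have ht : Filter.Tendsto (fun k : ℕ => lam ^ k * M) Filter.atTop (nhds (0 * M)) :=
      (tendsto_pow_atTop_nhds_zero_of_lt_one hlam0 hlam1).mul_const M
    rw [zero_mul] at ht
    obtain ⟨K, hK⟩ := (ht.eventually (gt_mem_nhds (half_pos hε))).exists
    exact ⟨K, hK.le⟩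
  obtain ⟨n, hn, hnd⟩ := hd (ε / 2 * (1 - lam)) (by positivity) (D + K) N
  have hind : ∀ j, j ≤ D + K → ‖y (n + 1 + j) - xstar‖ ≤ lam ^ j * M + ε / 2 := by
    intro j
    induction j with
    | zero =>
      intro _
      have := hbd (n + 1 + 0)
      rw [pow_zero]; linarith
    | succ j ih =>
      intro hj
      have h1 := hstep (n + 1 + j)
      have h2 := mul_le_mul_of_nonneg_left (ih (by omega)) hlam0
      have h3 := hnd (j + 1) (by omega) hj
      rw [dist_zero_left, norm_norm, show n + (j + 1) = n + 1 + j by ring] at h3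
      have h4 : n + 1 + (j + 1) = n + 1 + j + 1 := by ring
      rw [h4, pow_succ]
      linarith
  refine ⟨n + K, by omega, fun i hi1 hiD => ?_⟩
  have h := hind (K + i - 1) (by omega)
  rw [show n + 1 + (K + i - 1) = n + K + i by omega] at h
  have h5 : lam ^ (K + i - 1) ≤ lam ^ K :=
    pow_le_pow_of_le_one hlam0 hlam1.le (by omega)
  have h6 := mul_le_mul_of_nonneg_right h5 hM0
  rw [dist_comm, dist_eq_norm]
  linarith
end

section
/- Consider online-learning-based model-reference adaptive control with first-order Euler-discretised error dynamics e_{t+1} = M e_t + d_t, where M is a square real matrix with σ := ∑_{i=0}^∞ ‖M^i‖ < ∞ and d_t ∈ ℝ^n is the prediction error at time t. Suppose: (i) the disturbances are bounded, i.e. ∃ b ∀ t: ‖d_t‖ ≤ b; and (ii) the stage losses ℓ_t := ‖d_t‖₂² are non-negative and there exists a parameter achieving zero loss at every stage, and the parameter updates incur sublinear external regret so that (1/T) ∑_{t=1}^T ‖d_t‖₂² → 0 as T → ∞. Then the tracking error trajectory vanishes with increasing permanence: e_t ⇝ 0 (i.e. ‖e_t‖ ⇝ 0). -/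
theorem aux_bound {E : Type*} [NormedAddCommGroup E] [NormedSpace ℝ E] (M : E →L[ℝ] E)
    (e d : ℕ → E) (hrec : ∀ t : ℕ, e (t + 1) = M (e t) + d t) (δ : ℝ) (t : ℕ) (k : ℕ) :
    ∀ p : ℕ, (∀ j < k, ‖d (t + j)‖ ≤ δ) →
      ‖(M ^ p) (e (t + k))‖ ≤
        ‖M ^ (p + k)‖ * ‖e t‖ + ∑ j ∈ Finset.range k, ‖M ^ (p + j)‖ * δ := by
  induction k with
  | zero =>
    intro p _
    simpa using (M ^ p).le_opNorm (e t)
  | succ k ih =>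
    intro p h
    have h1 := ih (p + 1) (fun j hj => h j (by omega))
    have h2 : (M ^ p) (e (t + (k + 1))) = (M ^ (p + 1)) (e (t + k)) + (M ^ p) (d (t + k)) := by
      rw [← add_assoc, hrec, map_add, pow_succ]
      rfl
    have h3 : ‖(M ^ p) (d (t + k))‖ ≤ ‖M ^ p‖ * δ :=
      ((M ^ p).le_opNorm _).trans
        (mul_le_mul_of_nonneg_left (h k (by omega)) (norm_nonneg _))
    rw [h2, Finset.sum_range_succ']
    have h4 : ∑ j ∈ Finset.range k, ‖M ^ (p + (j + 1))‖ * δ =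
        ∑ j ∈ Finset.range k, ‖M ^ (p + 1 + j)‖ * δ :=
      Finset.sum_congr rfl fun j _ => by rw [show p + (j + 1) = p + 1 + j by omega]
    rw [h4, add_zero, show p + (k + 1) = p + 1 + k by omega]
    linarith [norm_add_le ((M ^ (p + 1)) (e (t + k))) ((M ^ p) (d (t + k)))]

theorem aux_bound' {E : Type*} [NormedAddCommGroup E] [NormedSpace ℝ E] (M : E →L[ℝ] E)
    (hsum : Summable fun i : ℕ => ‖M ^ i‖)
    (e d : ℕ → E) (hrec : ∀ t : ℕ, e (t + 1) = M (e t) + d t) (δ : ℝ) (hδ : 0 ≤ δ) (t : ℕ)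
    (k : ℕ) (h : ∀ j < k, ‖d (t + j)‖ ≤ δ) :
    ‖e (t + k)‖ ≤ ‖M ^ k‖ * ‖e t‖ + (∑' i : ℕ, ‖M ^ i‖) * δ := by
  have h1 := aux_bound M e d hrec δ t k 0 h
  simp only [zero_add, ← Finset.sum_mul] at h1
  have h2 := hsum.sum_le_tsum (Finset.range k) (fun i _ => norm_nonneg _)
  have h3 := mul_le_mul_of_nonneg_right h2 hδ
  have h4 : (M ^ 0) (e (t + k)) = e (t + k) := by simp
  rw [h4] at h1
  linarith

theorem aux_window (a : ℕ → ℝ) (ha : ∀ t, 0 ≤ a t)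
    (h : Filter.Tendsto (fun T : ℕ => (1 / (T : ℝ)) * ∑ t ∈ Finset.Icc 1 T, a t ^ 2)
      Filter.atTop (nhds 0)) (δ : ℝ) (hδ : 0 < δ) (L N : ℕ) (hL : 1 ≤ L) :
    ∃ t, N ≤ t ∧ ∀ j < L, a (t + j) ≤ δ := by
  by_contra! hc
  have key : ∀ m : ℕ, (m : ℝ) * δ ^ 2 ≤ ∑ t ∈ Finset.Icc 1 (N + m * L), a t ^ 2 := by
    intro m
    induction m with
    | zero => simpa using Finset.sum_nonneg (fun t _ => sq_nonneg (a t))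
    | succ m ih =>
      obtain ⟨j, hj, hlt⟩ := hc (N + m * L + 1) (by omega)
      have hsub : insert (N + m * L + 1 + j) (Finset.Icc 1 (N + m * L)) ⊆
          Finset.Icc 1 (N + (m + 1) * L) := by
        intro x hx
        rw [add_mul, one_mul]
        simp only [Finset.mem_insert, Finset.mem_Icc] at hx ⊢
        omega
      have h1 := Finset.sum_le_sum_of_subset_of_nonneg hsub
        (f := fun t => a t ^ 2) (fun t _ _ => sq_nonneg (a t))
      rw [Finset.sum_insert (by simp only [Finset.mem_Icc]; omega)] at h1
      have h2 : δ ^ 2 ≤ a (N + m * L + 1 + j) ^ 2 := pow_le_pow_left₀ hδ.le hlt.le 2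
      push_cast
      linarith
  have hNL : (0 : ℝ) < (N : ℝ) + L := by
    have : (1 : ℝ) ≤ L := by exact_mod_cast hL
    positivity
  have hpos : 0 < δ ^ 2 / ((N : ℝ) + L) := by positivity
  obtain ⟨T0, hT0⟩ := Filter.eventually_atTop.1 (h.eventually (gt_mem_nhds hpos))
  have hm : T0 ≤ N + (T0 + 1) * L := by nlinarith
  have h1 := hT0 _ hm
  have h2 := key (T0 + 1)
  have hm1 : (1 : ℝ) ≤ ((T0 + 1 : ℕ) : ℝ) := by push_cast; linarith [Nat.cast_nonneg (α := ℝ) T0]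
  have hT : (0 : ℝ) < ((N + (T0 + 1) * L : ℕ) : ℝ) := by
    have : 0 < N + (T0 + 1) * L := by positivity
    exact_mod_cast this
  rw [one_div, inv_mul_lt_iff₀ hT, mul_div_assoc', lt_div_iff₀ hNL] at h1
  have h3 := mul_le_mul_of_nonneg_right h2 hNL.le
  have h4 : ((N + (T0 + 1) * L : ℕ) : ℝ) ≤ ((T0 + 1 : ℕ) : ℝ) * ((N : ℝ) + L) := by
    have : N + (T0 + 1) * L ≤ (T0 + 1) * (N + L) := by nlinarith [Nat.zero_le (T0 * N)]
    exact_mod_cast this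
  have h5 := mul_le_mul_of_nonneg_right h4 (sq_nonneg δ)
  linarith

/-- No-regret learning-based model-reference adaptive control: for the discretised error
dynamics `e_{t+1} = M e_t + d_t` with `σ = ∑ ‖Mⁱ‖ < ∞`, bounded prediction errors `d_t`,
and Cesàro-vanishing squared prediction losses `‖d_t‖²` (as guaranteed by a sublinear-regret
learner with a realisable target), the tracking error vanishes with increasing permanence. -/
theorem tracking_error_convIP {n : ℕ}
    (M : EuclideanSpace ℝ (Fin n) →L[ℝ] EuclideanSpace ℝ (Fin n))
    (hsum : Summable fun i : ℕ => ‖M ^ i‖)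
    (e d : ℕ → EuclideanSpace ℝ (Fin n))
    (hrec : ∀ t : ℕ, e (t + 1) = M (e t) + d t)
    (b : ℝ) (hb : ∀ t, ‖d t‖ ≤ b)
    (hcesaro : Filter.Tendsto (fun T : ℕ => (1 / (T : ℝ)) * ∑ t ∈ Finset.Icc 1 T, ‖d t‖ ^ 2)
      Filter.atTop (nhds 0)) :
    ConvIP e 0 := by
  intro ε hε D N
  set σ := ∑' i : ℕ, ‖M ^ i‖ with hσ
  have hσ0 : 0 ≤ σ := tsum_nonneg fun i => norm_nonneg _
  have hb0 : 0 ≤ b := (norm_nonneg _).trans (hb 0)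
  set B := σ * ‖e 0‖ + σ * b with hB
  have hB0 : 0 ≤ B := by positivity
  have heB : ∀ k, ‖e k‖ ≤ B := by
    intro k
    have h1 := aux_bound' M hsum e d hrec b hb0 0 k (fun j _ => hb _)
    rw [zero_add] at h1
    have h2 : ‖M ^ k‖ ≤ σ := hsum.le_tsum k (fun i _ => norm_nonneg _)
    have h3 := mul_le_mul_of_nonneg_right h2 (norm_nonneg (e 0))
    linarith
  have hlim : Filter.Tendsto (fun k : ℕ => ‖M ^ k‖ * B) Filter.atTop (nhds 0) := by
    simpa using hsum.tendsto_atTop_zero.mul_const B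
  obtain ⟨K, hK⟩ := Filter.eventually_atTop.1 (hlim.eventually (gt_mem_nhds (half_pos hε)))
  have hδ : 0 < ε / 2 / (σ + 1) := by positivity
  obtain ⟨t, hNt, ht⟩ := aux_window (fun t => ‖d t‖) (fun t => norm_nonneg _) hcesaro
    (ε / 2 / (σ + 1)) hδ (K + D + 1) N (by omega)
  refine ⟨t + K, by omega, fun i _ hi => ?_⟩
  rw [dist_zero_left, add_assoc]
  have h1 := aux_bound' M hsum e d hrec _ hδ.le t (K + i) (fun j hj => ht j (by omega))
  have h2 := hK (K + i) (by omega)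
  have h3 := mul_le_mul_of_nonneg_left (heB t) (norm_nonneg (M ^ (K + i)))
  have h4 : σ * (ε / 2 / (σ + 1)) ≤ ε / 2 := by
    rw [mul_div_assoc', div_le_iff₀ (by positivity)]
    nlinarith
  linarith
end
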